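/- Let φ_1, …, φ_N be contractive similitudes on ℝ^d, let C = C_1 ∪ ⋯ ∪ C_m (m ≥ 2) be a union of pairwise disjoint arcs C_j, and let K be the attractor of the IFS with condensation {C; φ_1, …, φ_N}. Suppose: (i) K is an arc; (ii) K decomposes as γ_1 + γ_2 + ⋯ + γ_{m+N}, where γ_1, …, γ_{m+N} is a rearrangement (a bijective relabeling) of the list C_1, …, C_m, φ_1(K), …, φ_N(K) such that γ_1 and γ_{m+N} both belong to {C_1, …, C_m}; and (iii) dim_H E > 1, where E is the attractor of the iterated function system {φ_1, …, φ_N} and dim_H denotes Hausdorff dimension. Then K is a Whitney set. -/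

import Mathlib

open Set MeasureTheory

noncomputable section

/-- An arc in `ℝ^d`: a subset homeomorphic to `[0,1]`, realized as the image of a
continuous injection of `[0,1]` (automatically a homeomorphism onto its image). -/
def IsArc {d : ℕ} (γ : Set (EuclideanSpace ℝ (Fin d))) : Prop :=
  ∃ h : ℝ → EuclideanSpace ℝ (Fin d), ContinuousOn h (Set.Icc 0 1) ∧
    Set.InjOn h (Set.Icc 0 1) ∧ h '' Set.Icc 0 1 = γ

/-- A compact connected set `E ⊆ ℝ^d` is a Whitney set if there is a `C¹` function
`f : ℝ^d → ℝ` whose derivative vanishes on `E` but which is not constant on `E`. -/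
def IsWhitneySet {d : ℕ} (E : Set (EuclideanSpace ℝ (Fin d))) : Prop :=
  IsCompact E ∧ IsConnected E ∧
    ∃ f : EuclideanSpace ℝ (Fin d) → ℝ,
      ContDiff ℝ 1 f ∧ (∀ x ∈ E, fderiv ℝ f x = 0) ∧
        ¬ ∀ x ∈ E, ∀ y ∈ E, f x = f y

/-!
Parametrize the arc `K` by `γ : [0, 1] → V`. Each piece `φ i '' K` of the decomposition is a scaled
copy of `K`, so there is a function `F` on `[0, 1]`, locally constant off the parameter intervals of
these copies, which rises by the weight `p i` on the `i`-th copy and looks there like `p i • F` up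
to orientation. With `p i` proportional to `ρ i ^ s` and `∑ i, p i = 1`, the oscillation of `F` over
a copy of `K` of scale `r` is at most `r ^ s` whenever `∑ i, ρ i ^ s ≥ 1`. As the first and the last
piece are not copies, `F` is constant near both ends of `K`, so a short stretch of `K` that meets a
copy either lies inside it, and can be magnified, or does not see `F` move near the junction. Hence
`F` is `s`-Hölder with respect to the distance in `V`. Since `dimH E > 1`, covering `E` by its
images under long words shows that some `s > 1` is admissible.

It remains to extend an `s`-Hölder function with `s > 1` from a compact set to a `C¹` function whose
derivative vanishes on the set: the infimal convolution with `M * dist · · ^ s` extends it, and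
mollifying this extension at scale `2⁻ⁿ`, at distance about `2⁻ⁿ` from the set, makes it smooth
while keeping the derivative of order `2 ^ (-n * (s - 1))`.
-/

section Mollification

open Metric ContinuousLinearMap
open scoped Convolution

variable {V F : Type*} [NormedAddCommGroup V] [NormedSpace ℝ V] [NormedAddCommGroup F]
  {g : V → F} {r ε : ℝ} {c : F} {x : V}

lemma norm_comp_smul_sub_le_of_mem_ball (hr : 0 < r) (hg : ∀ z ∈ ball x r, ‖g z - c‖ ≤ ε) :
    ∀ w ∈ ball (r⁻¹ • x) 1, dist (g (r • w)) c ≤ ε := by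
  intro w hw
  rw [dist_eq_norm]
  refine hg _ ?_
  rw [mem_ball, ← smul_inv_smul₀ hr.ne' x, dist_smul₀, Real.norm_of_nonneg hr.le]
  exact mul_lt_of_lt_one_right hr hw

variable [NormedSpace ℝ F] [FiniteDimensional ℝ V] [MeasurableSpace V] (μ : Measure V)

/-- The smooth bump function underlying `mollify`. Its support lies strictly inside the unit ball,
so that only values on the open ball of radius `r` enter a mollification at scale `r`. -/
def mollifierBump (V : Type*) [NormedAddCommGroup V] [NormedSpace ℝ V]
    [FiniteDimensional ℝ V] : ContDiffBump (0 : V) :=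
  ⟨1 / 4, 1 / 2, by norm_num, by norm_num⟩

lemma tsupport_normed_mollifierBump_subset [BorelSpace V] [μ.IsAddHaarMeasure] :
    tsupport ((mollifierBump V).normed μ) ⊆ ball 0 1 :=
  (mollifierBump V).tsupport_normed_eq.trans_subset
    (closedBall_subset_ball (by norm_num [mollifierBump]))

/-- The mollification of `g` at scale `r`. The function is rescaled instead of the kernel, so that
the kernel, and with it the constant `mollifyConst` in the derivative bound, does not depend
on `r`. -/
def mollify (r : ℝ) (g : V → F) (x : V) : F :=
  ((mollifierBump V).normed μ ⋆[lsmul ℝ ℝ, μ] fun w => g (r • w)) (r⁻¹ • x)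

/-- A constant `B` such that a function within `ε` of a constant on a ball of radius `r` has a
mollification at scale `r` whose derivative at the centre is at most `B * ε / r`. -/
def mollifyConst : ℝ :=
  ∫ w, ‖fderiv ℝ ((mollifierBump V).normed μ) w‖ ∂μ

lemma mollifyConst_nonneg : 0 ≤ mollifyConst μ :=
  integral_nonneg fun _ => norm_nonneg _

variable [BorelSpace V] [μ.IsAddHaarMeasure]

lemma hasFDerivAt_convolution_normed_mollifierBump {h : V → F} (hh : LocallyIntegrable h μ)
    (x : V) :
    HasFDerivAt ((mollifierBump V).normed μ ⋆[lsmul ℝ ℝ, μ] h)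
      ((fderiv ℝ ((mollifierBump V).normed μ) ⋆[(lsmul ℝ ℝ).precompL V, μ] h) x) x :=
  (mollifierBump V).hasCompactSupport_normed.hasFDerivAt_convolution_left _
    (mollifierBump V).contDiff_normed hh x

lemma contDiff_one_mollify (hg : LocallyIntegrable (fun w => g (r • w)) μ) :
    ContDiff ℝ 1 (mollify μ r g) :=
  ((mollifierBump V).hasCompactSupport_normed.contDiff_convolution_left _
    (mollifierBump V).contDiff_normed hg).comp (contDiff_const_smul _)

lemma fderiv_mollify (hg : LocallyIntegrable (fun w => g (r • w)) μ) (x : V) :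
    fderiv ℝ (mollify μ r g) x =
      r⁻¹ • (fderiv ℝ ((mollifierBump V).normed μ) ⋆[(lsmul ℝ ℝ).precompL V, μ]
        fun w => g (r • w)) (r⁻¹ • x) := by
  have hscale : HasFDerivAt (fun x : V => r⁻¹ • x) (r⁻¹ • .id ℝ V) x :=
    (hasFDerivAt_id x).const_smul r⁻¹
  have hcomp := ((hasFDerivAt_convolution_normed_mollifierBump μ hg _).comp x hscale).fderiv
  rwa [comp_smul, comp_id] at hcomp

variable [CompleteSpace F]

-- Differentiate the convolution of the kernel with a constant, which is that constant.
lemma integral_precompL_fderiv_normed_mollifierBump (c : F) :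
    ∫ w, (lsmul ℝ ℝ).precompL V (fderiv ℝ ((mollifierBump V).normed μ) w) c ∂μ = 0 := by
  have hderiv := hasFDerivAt_convolution_normed_mollifierBump μ
    (continuous_const (y := c)).locallyIntegrable 0
  have hconst : ((mollifierBump V).normed μ ⋆[lsmul ℝ ℝ, μ] fun _ => c) = fun _ => c :=
    funext fun _ => (mollifierBump V).integral_normed_smul μ c
  rw [hconst] at hderiv
  exact hderiv.unique (hasFDerivAt_const c _)

theorem norm_mollify_sub_le (hg : LocallyIntegrable (fun w => g (r • w)) μ) (hr : 0 < r)
    (hgc : ∀ z ∈ ball x r, ‖g z - c‖ ≤ ε) : ‖mollify μ r g x - c‖ ≤ ε := by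
  have hε : 0 ≤ ε := (norm_nonneg _).trans (hgc x (mem_ball_self hr))
  rw [← dist_eq_norm]
  exact dist_convolution_le hε
    ((subset_tsupport _).trans (tsupport_normed_mollifierBump_subset μ))
    (mollifierBump V).nonneg_normed (mollifierBump V).integral_normed hg.aestronglyMeasurable
    (norm_comp_smul_sub_le_of_mem_ball hr hgc)

theorem norm_fderiv_mollify_le (hg : LocallyIntegrable (fun w => g (r • w)) μ) (hr : 0 < r)
    (hgc : ∀ z ∈ ball x r, ‖g z - c‖ ≤ ε) :
    ‖fderiv ℝ (mollify μ r g) x‖ ≤ mollifyConst μ * ε / r := by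
  have hε : 0 ≤ ε := (norm_nonneg _).trans (hgc x (mem_ball_self hr))
  have hint : Integrable (fderiv ℝ ((mollifierBump V).normed μ)) μ :=
    ((mollifierBump V).contDiff_normed.continuous_fderiv one_ne_zero)
      |>.integrable_of_hasCompactSupport ((mollifierBump V).hasCompactSupport_normed.fderiv ℝ)
  have hconv := dist_convolution_le' ((lsmul ℝ ℝ).precompL V) hε hint
    ((support_fderiv_subset ℝ).trans (tsupport_normed_mollifierBump_subset μ))
    hg.aestronglyMeasurable (norm_comp_smul_sub_le_of_mem_ball hr hgc)
  rw [integral_precompL_fderiv_normed_mollifierBump, dist_zero_right] at hconv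
  rw [fderiv_mollify μ hg, norm_smul, norm_inv, Real.norm_of_nonneg hr.le, ← div_eq_inv_mul]
  have hlsmul := (norm_precompL_le V (lsmul ℝ ℝ : ℝ →L[ℝ] F →L[ℝ] F)).trans opNorm_lsmul_le
  calc _ ≤ _ := div_le_div_of_nonneg_right hconv hr.le
    _ ≤ 1 * mollifyConst μ * ε / r := by
      gcongr
      exact le_rfl
    _ = mollifyConst μ * ε / r := by rw [one_mul]

end Mollification

section HolderEnvelope

open scoped NNReal

variable {X : Type*} [PseudoMetricSpace X] {K : Set X} {f : X → ℝ} {M s : ℝ≥0}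

lemma dist_rpow_le_two_rpow_mul_add (hs : 1 ≤ s) (x y z : X) :
    dist y z ^ (s : ℝ) ≤ 2 ^ ((s : ℝ) - 1) * (dist x y ^ (s : ℝ) + dist x z ^ (s : ℝ)) := by
  calc dist y z ^ (s : ℝ) ≤ (dist x y + dist x z) ^ (s : ℝ) :=
        Real.rpow_le_rpow dist_nonneg (dist_triangle_left y z x) s.coe_nonneg
    _ ≤ _ := by exact_mod_cast NNReal.rpow_add_le_mul_rpow_add_rpow (nndist x y) (nndist x z) hs

/-- The `s`-Hölder envelope of the restriction of `f` to `K`: an infimal convolution, which stays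
within a constant times `dist x y ^ s` of `f y` for all `y ∈ K` even though `s` may exceed `1`. -/
def holderEnvelope (A : ℝ) (s : ℝ≥0) (f : X → ℝ) (K : Set X) (x : X) : ℝ :=
  ⨅ y : K, (f y + A * dist x y ^ (s : ℝ))

lemma continuous_holderEnvelope (A : ℝ) (hK : IsCompact K) (hf : ContinuousOn f K) :
    Continuous (holderEnvelope A s f K) := by
  have : CompactSpace K := isCompact_iff_compactSpace.mp hK
  have hfK : Continuous fun y : K => f y := hf.domRestrict
  have hjoint : Continuous fun p : X × K => f p.2 + A * dist p.1 (p.2 : X) ^ (s : ℝ) :=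
    (hfK.comp continuous_snd).add <| continuous_const.mul <|
      Continuous.rpow_const (by fun_prop) fun _ => Or.inr s.coe_nonneg
  have hsInf := isCompact_univ.continuous_sInf
    (f := fun (x : X) (y : K) => f y + A * dist x y ^ (s : ℝ)) hjoint
  simp only [image_univ] at hsInf
  exact hsInf

lemma abs_holderEnvelope_sub_le (hs : 1 ≤ s) (hf : HolderOnWith M s f K) (x : X) {y : X}
    (hy : y ∈ K) :
    |holderEnvelope (M * 2 ^ ((s : ℝ) - 1)) s f K x - f y| ≤
      M * 2 ^ ((s : ℝ) - 1) * dist x y ^ (s : ℝ) := by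
  set A : ℝ := M * 2 ^ ((s : ℝ) - 1)
  have hlower : ∀ z : K, f y - A * dist x y ^ (s : ℝ) ≤ f z + A * dist x z ^ (s : ℝ) := by
    intro z
    have hfyz : f y - f z ≤ A * (dist x y ^ (s : ℝ) + dist x z ^ (s : ℝ)) :=
      calc f y - f z ≤ M * dist y z ^ (s : ℝ) := (le_abs_self _).trans (hf.dist_le hy z.2)
        _ ≤ M * (2 ^ ((s : ℝ) - 1) * (dist x y ^ (s : ℝ) + dist x z ^ (s : ℝ))) := by
          gcongr
          exact dist_rpow_le_two_rpow_mul_add hs x y z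
        _ = _ := (mul_assoc _ _ _).symm
    linarith
  have : Nonempty K := ⟨y, hy⟩
  have hle : holderEnvelope A s f K x ≤ f y + A * dist x y ^ (s : ℝ) :=
    ciInf_le ⟨_, forall_mem_range.mpr hlower⟩ (⟨y, hy⟩ : K)
  exact abs_le.mpr ⟨by linarith [show _ ≤ holderEnvelope A s f K x from le_ciInf hlower],
    by linarith⟩

end HolderEnvelope

section Cutoff

open Metric

lemma norm_indicator_one_sub_zero_le {X : Type*} (s : Set X) (z : X) :
    ‖s.indicator (fun _ => (1 : ℝ)) z - 0‖ ≤ 1 := by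
  rw [sub_zero]
  exact (norm_indicator_le_norm_self _ _).trans norm_one.le

variable {V : Type*} [NormedAddCommGroup V] [NormedSpace ℝ V] [FiniteDimensional ℝ V]
  [MeasurableSpace V] [BorelSpace V] (μ : Measure V) [μ.IsAddHaarMeasure]
  {K : Set V} {r : ℝ} {x : V}

/-- A `C¹` cutoff at scale `r`, equal to `1` near `K` and to `0` away from
`Metric.thickening (3 * r) K`. -/
def smoothCutoff (r : ℝ) (K : Set V) : V → ℝ :=
  mollify μ r ((thickening (2 * r) K).indicator fun _ => 1)

lemma locallyIntegrable_indicator_thickening (r : ℝ) (K : Set V) :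
    LocallyIntegrable (fun w => (thickening (2 * r) K).indicator (fun _ => (1 : ℝ)) (r • w)) μ :=
  (continuous_const (y := (1 : ℝ))).locallyIntegrable.indicator
    (isOpen_thickening.preimage (continuous_const_smul r)).measurableSet

lemma contDiff_one_smoothCutoff (r : ℝ) (K : Set V) : ContDiff ℝ 1 (smoothCutoff μ r K) :=
  contDiff_one_mollify μ (locallyIntegrable_indicator_thickening μ r K)

lemma norm_smoothCutoff_le_one (hr : 0 < r) (x : V) : ‖smoothCutoff μ r K x‖ ≤ 1 := by
  rw [← sub_zero (smoothCutoff μ r K x)]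
  exact norm_mollify_sub_le μ (locallyIntegrable_indicator_thickening μ r K) hr
    fun z _ => norm_indicator_one_sub_zero_le _ z

lemma norm_fderiv_smoothCutoff_le (hr : 0 < r) (x : V) :
    ‖fderiv ℝ (smoothCutoff μ r K) x‖ ≤ mollifyConst μ / r := by
  rw [← mul_one (mollifyConst μ)]
  exact norm_fderiv_mollify_le μ (locallyIntegrable_indicator_thickening μ r K) hr
    fun z _ => norm_indicator_one_sub_zero_le _ z

lemma smoothCutoff_eq_and_fderiv_eq_zero {c : ℝ} (hr : 0 < r)
    (hc : ∀ z ∈ ball x r, (thickening (2 * r) K).indicator (fun _ => (1 : ℝ)) z = c) :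
    smoothCutoff μ r K x = c ∧ fderiv ℝ (smoothCutoff μ r K) x = 0 := by
  have hint := locallyIntegrable_indicator_thickening μ r K
  have hzero : ∀ z ∈ ball x r,
      ‖(thickening (2 * r) K).indicator (fun _ => (1 : ℝ)) z - c‖ ≤ 0 := fun z hz => by
    rw [hc z hz, sub_self, norm_zero]
  constructor
  · exact sub_eq_zero.mp (norm_le_zero_iff.mp (norm_mollify_sub_le μ hint hr hzero))
  · have hderiv := norm_fderiv_mollify_le μ hint hr hzero
    rw [mul_zero, zero_div] at hderiv
    exact norm_le_zero_iff.mp hderiv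

lemma smoothCutoff_of_mem (hr : 0 < r) (hx : x ∈ K) :
    smoothCutoff μ r K x = 1 ∧ fderiv ℝ (smoothCutoff μ r K) x = 0 :=
  smoothCutoff_eq_and_fderiv_eq_zero μ hr fun _ hz => indicator_of_mem
    (ball_subset_thickening hx _ (ball_subset_ball (by linarith) hz)) _

lemma smoothCutoff_of_notMem_thickening (hr : 0 < r) (hx : x ∉ thickening (3 * r) K) :
    smoothCutoff μ r K x = 0 ∧ fderiv ℝ (smoothCutoff μ r K) x = 0 := by
  refine smoothCutoff_eq_and_fderiv_eq_zero μ hr fun z hz =>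
    indicator_of_notMem (fun hzK => hx ?_) _
  obtain ⟨y, hy, hzy⟩ := mem_thickening_iff.mp hzK
  have hxz : dist x z < r := mem_ball'.mp hz
  exact mem_thickening_iff.mpr ⟨y, hy, by linarith [dist_triangle x z y]⟩

end Cutoff

section Telescoping

open Filter Topology

lemma tsum_eq_sub_of_tendsto {F : Type*} [NormedAddCommGroup F] {a v : ℕ → F} {c : F}
    (hv : Summable v) (hva : ∀ k, v k = a (k + 1) - a k) (ha : Tendsto a atTop (𝓝 c)) :
    ∑' k, v k = c - a 0 := by
  refine tendsto_nhds_unique hv.hasSum.tendsto_sum_nat ?_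
  simp only [hva, Finset.sum_range_sub]
  exact ha.sub_const _

lemma contDiff_one_tsum_of_norm_le {V F : Type*} [NormedAddCommGroup V] [NormedSpace ℝ V]
    [NormedAddCommGroup F] [NormedSpace ℝ F] [CompleteSpace F] {u : ℕ → V → F} {b : ℕ → ℝ}
    (hu : ∀ k, ContDiff ℝ 1 (u k)) (hb : Summable b) (hub : ∀ k x, ‖u k x‖ ≤ b k)
    (hub' : ∀ k x, ‖fderiv ℝ (u k) x‖ ≤ b k) : ContDiff ℝ 1 fun x => ∑' k, u k x := by
  refine contDiff_tsum (N := 1) hu (fun _ _ => hb) fun j k x hj => ?_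
  obtain rfl | rfl : j = 0 ∨ j = 1 := by have : j ≤ 1 := mod_cast hj; omega
  · rw [norm_iteratedFDeriv_zero]
    exact hub k x
  · rw [norm_iteratedFDeriv_one]
    exact hub' k x

end Telescoping

section WhitneyExtension

open Metric Filter Topology

lemma norm_sub_le_of_mem_ball {X : Type*} [PseudoMetricSpace X] {g : X → ℝ} {A s r : ℝ}
    {x y : X} (hA : 0 ≤ A) (hs : 0 ≤ s) (hgy : ∀ z, ‖g z - g y‖ ≤ A * dist z y ^ s)
    (hxy : dist x y ≤ 3 * r) : ∀ z ∈ ball x r, ‖g z - g y‖ ≤ A * (4 * r) ^ s := by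
  intro z hz
  have hzy : dist z y ≤ 4 * r := by linarith [dist_triangle z x y, mem_ball.mp hz]
  exact (hgy z).trans (by gcongr)

lemma summable_rpow_div_half_pow {s : ℝ} (hs : 1 < s) :
    Summable fun k : ℕ => (4 * (1 / 2) ^ k) ^ s / (1 / 2 : ℝ) ^ k := by
  have hratio : (1 / 2 : ℝ) ^ (s - 1) < 1 :=
    Real.rpow_lt_one (by norm_num) (by norm_num) (by linarith)
  refine ((summable_geometric_of_lt_one (by positivity) hratio).mul_left (4 ^ s)).congr fun k => ?_
  have hk : (0 : ℝ) < (1 / 2) ^ k := by positivity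
  rw [Real.mul_rpow (by norm_num) hk.le, mul_div_assoc, ← Real.rpow_sub_one hk.ne',
    ← Real.rpow_natCast, ← Real.rpow_natCast, ← Real.rpow_mul (by norm_num),
    ← Real.rpow_mul (by norm_num), mul_comm (s - 1), mul_comm]

variable {V : Type*} [NormedAddCommGroup V] [NormedSpace ℝ V] [FiniteDimensional ℝ V]
  [MeasurableSpace V] [BorelSpace V] (μ : Measure V) [μ.IsAddHaarMeasure]
  {K : Set V} {g : V → ℝ} {A s r : ℝ} {x : V}

lemma locallyIntegrable_comp_smul (hg : Continuous g) (r : ℝ) :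
    LocallyIntegrable (fun w => g (r • w)) μ :=
  (hg.comp (continuous_const_smul r)).locallyIntegrable

lemma differentiable_mollify (hg : Continuous g) (r : ℝ) : Differentiable ℝ (mollify μ r g) :=
  (contDiff_one_mollify μ (locallyIntegrable_comp_smul μ hg r)).differentiable one_ne_zero

lemma norm_mollify_half_sub_mollify_le {c ε : ℝ} (hg : Continuous g) (hr : 0 < r)
    (hgc : ∀ z ∈ ball x r, ‖g z - c‖ ≤ ε) :
    ‖mollify μ (r / 2) g x - mollify μ r g x‖ ≤ 2 * ε ∧
      ‖fderiv ℝ (mollify μ (r / 2) g) x - fderiv ℝ (mollify μ r g) x‖ ≤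
        3 * mollifyConst μ * (ε / r) := by
  have hint := locallyIntegrable_comp_smul μ hg
  have hgc' : ∀ z ∈ ball x (r / 2), ‖g z - c‖ ≤ ε := fun z hz =>
    hgc z (ball_subset_ball (half_le_self hr.le) hz)
  constructor
  · rw [← sub_sub_sub_cancel_right _ _ c, two_mul]
    exact norm_sub_le_of_le (norm_mollify_sub_le μ (hint _) (half_pos hr) hgc')
      (norm_mollify_sub_le μ (hint _) hr hgc)
  · exact (norm_sub_le_of_le (norm_fderiv_mollify_le μ (hint _) (half_pos hr) hgc')
      (norm_fderiv_mollify_le μ (hint _) hr hgc)).trans_eq (by field_simp; ring)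

/-- The correction passing from scale `r` to scale `r / 2` near `K` in the construction of a `C¹`
extension. -/
def scaleCorrection (g : V → ℝ) (K : Set V) (r : ℝ) (x : V) : ℝ :=
  smoothCutoff μ r K x * (mollify μ (r / 2) g x - mollify μ r g x)

lemma contDiff_one_scaleCorrection (hg : Continuous g) (K : Set V) (r : ℝ) :
    ContDiff ℝ 1 (scaleCorrection μ g K r) :=
  (contDiff_one_smoothCutoff μ r K).mul
    ((contDiff_one_mollify μ (locallyIntegrable_comp_smul μ hg _)).sub
      (contDiff_one_mollify μ (locallyIntegrable_comp_smul μ hg _)))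

lemma fderiv_scaleCorrection (hg : Continuous g) (K : Set V) (r : ℝ) (x : V) :
    fderiv ℝ (scaleCorrection μ g K r) x =
      smoothCutoff μ r K x • (fderiv ℝ (mollify μ (r / 2) g) x - fderiv ℝ (mollify μ r g) x) +
        (mollify μ (r / 2) g x - mollify μ r g x) • fderiv ℝ (smoothCutoff μ r K) x := by
  have hdiff := differentiable_mollify μ hg
  rw [← fderiv_fun_sub (hdiff _ x) (hdiff _ x)]
  exact fderiv_fun_mul ((contDiff_one_smoothCutoff μ r K).differentiable one_ne_zero x)
    ((hdiff _ x).fun_sub (hdiff _ x))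

lemma scaleCorrection_of_mem (hg : Continuous g) (hr : 0 < r) (hx : x ∈ K) :
    scaleCorrection μ g K r x = mollify μ (r / 2) g x - mollify μ r g x ∧
      fderiv ℝ (scaleCorrection μ g K r) x =
        fderiv ℝ (mollify μ (r / 2) g) x - fderiv ℝ (mollify μ r g) x := by
  obtain ⟨hone, hderiv⟩ := smoothCutoff_of_mem μ hr hx
  rw [fderiv_scaleCorrection μ hg, scaleCorrection, hone, hderiv]
  simp only [one_mul, one_smul, smul_zero, add_zero, and_self]

lemma scaleCorrection_of_notMem_thickening (hg : Continuous g) (hr : 0 < r)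
    (hx : x ∉ thickening (3 * r) K) :
    scaleCorrection μ g K r x = 0 ∧ fderiv ℝ (scaleCorrection μ g K r) x = 0 := by
  obtain ⟨hzero, hderiv⟩ := smoothCutoff_of_notMem_thickening μ hr hx
  rw [fderiv_scaleCorrection μ hg, scaleCorrection, hzero, hderiv]
  simp only [zero_mul, zero_smul, smul_zero, add_zero, and_self]

lemma norm_scaleCorrection_le (hg : Continuous g) (hA : 0 ≤ A) (hs : 0 ≤ s)
    (hgK : ∀ z, ∀ y ∈ K, ‖g z - g y‖ ≤ A * dist z y ^ s) (hr : 0 < r) (x : V) :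
    ‖scaleCorrection μ g K r x‖ ≤ 2 * (A * (4 * r) ^ s) ∧
      ‖fderiv ℝ (scaleCorrection μ g K r) x‖ ≤ 5 * mollifyConst μ * (A * (4 * r) ^ s / r) := by
  have hB := mollifyConst_nonneg μ
  by_cases hx : x ∈ thickening (3 * r) K
  swap
  · obtain ⟨hzero, hderiv⟩ := scaleCorrection_of_notMem_thickening μ hg hr hx
    rw [hzero, hderiv, norm_zero, norm_zero]
    constructor <;> positivity
  obtain ⟨y, hy, hxy⟩ := mem_thickening_iff.mp hx
  have hnear := norm_sub_le_of_mem_ball hA hs (hgK · y hy) hxy.le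
  set ε : ℝ := A * (4 * r) ^ s
  obtain ⟨hdiff, hfderiv⟩ := norm_mollify_half_sub_mollify_le μ hg hr hnear
  have hone := norm_smoothCutoff_le_one μ (K := K) hr x
  constructor
  · calc _ ≤ 1 * (2 * ε) := norm_mul_le_of_le hone hdiff
      _ = 2 * ε := one_mul _
  · rw [fderiv_scaleCorrection μ hg]
    calc _ ≤ 1 * (3 * mollifyConst μ * (ε / r)) + 2 * ε * (mollifyConst μ / r) :=
          norm_add_le_of_le
            ((norm_smul _ _).trans_le (mul_le_mul hone hfderiv (norm_nonneg _) zero_le_one))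
            ((norm_smul _ _).trans_le (mul_le_mul hdiff (norm_fderiv_smoothCutoff_le μ hr x)
              (norm_nonneg _) (by positivity)))
      _ = 5 * mollifyConst μ * (ε / r) := by ring

/-- The mollification of `g` at scale `1`, corrected near `K` at all dyadic scales so that the
values on `K` converge to those of `g`. -/
def whitneyExtension (g : V → ℝ) (K : Set V) (x : V) : ℝ :=
  mollify μ 1 g x + ∑' k : ℕ, scaleCorrection μ g K ((1 / 2) ^ k) x

lemma norm_scaleCorrection_half_pow_le (hg : Continuous g) (hA : 0 ≤ A) (hs : 0 ≤ s)
    (hgK : ∀ z, ∀ y ∈ K, ‖g z - g y‖ ≤ A * dist z y ^ s) (k : ℕ) (x : V) :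
    max ‖scaleCorrection μ g K ((1 / 2) ^ k) x‖
        ‖fderiv ℝ (scaleCorrection μ g K ((1 / 2) ^ k)) x‖ ≤
      (2 + 5 * mollifyConst μ) * A * ((4 * (1 / 2) ^ k) ^ s / (1 / 2) ^ k) := by
  have hr : (0 : ℝ) < (1 / 2) ^ k := by positivity
  obtain ⟨hval, hderiv⟩ := norm_scaleCorrection_le μ hg hA hs hgK hr x
  have hε : A * (4 * (1 / 2) ^ k) ^ s ≤ A * (4 * (1 / 2) ^ k) ^ s / (1 / 2) ^ k :=
    le_div_self (by positivity) hr (pow_le_one₀ (by norm_num) (by norm_num))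
  have hBε : 0 ≤ 5 * mollifyConst μ * (A * (4 * (1 / 2) ^ k) ^ s / (1 / 2) ^ k) := by
    have := mollifyConst_nonneg μ
    positivity
  have hε0 : 0 ≤ A * (4 * (1 / 2) ^ k) ^ s := by positivity
  rw [mul_assoc, ← mul_div_assoc, add_mul]
  exact max_le (by linarith) (by linarith)

lemma contDiff_one_whitneyExtension (hg : Continuous g) (hA : 0 ≤ A) (hs : 1 < s)
    (hgK : ∀ z, ∀ y ∈ K, ‖g z - g y‖ ≤ A * dist z y ^ s) :
    ContDiff ℝ 1 (whitneyExtension μ g K) := by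
  have hbound := norm_scaleCorrection_half_pow_le μ hg hA (by linarith) hgK
  exact (contDiff_one_mollify μ (locallyIntegrable_comp_smul μ hg _)).add <|
    contDiff_one_tsum_of_norm_le (fun _ => contDiff_one_scaleCorrection μ hg K _)
      ((summable_rpow_div_half_pow hs).mul_left _) (fun k x => (le_max_left _ _).trans (hbound k x))
      (fun k x => (le_max_right _ _).trans (hbound k x))

lemma tendsto_mollify_half_pow_of_mem (hg : Continuous g) (hA : 0 ≤ A) (hs : 1 < s)
    (hgx : ∀ z, ‖g z - g x‖ ≤ A * dist z x ^ s) :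
    Tendsto (fun k : ℕ => mollify μ ((1 / 2) ^ k) g x) atTop (𝓝 (g x)) ∧
      Tendsto (fun k : ℕ => fderiv ℝ (mollify μ ((1 / 2) ^ k) g) x) atTop (𝓝 0) := by
  have hlim := (summable_rpow_div_half_pow hs).tendsto_atTop_zero
  have hr : ∀ k : ℕ, (0 : ℝ) < (1 / 2) ^ k := fun k => by positivity
  have hint := locallyIntegrable_comp_smul μ hg
  have hnear : ∀ k : ℕ, ∀ z ∈ ball x ((1 / 2) ^ k), ‖g z - g x‖ ≤ A * (4 * (1 / 2) ^ k) ^ s :=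
    fun k => norm_sub_le_of_mem_ball hA (by linarith) hgx
      (by rw [dist_self]; linarith [hr k])
  constructor
  · refine tendsto_iff_norm_sub_tendsto_zero.mpr <| squeeze_zero (fun _ => norm_nonneg _)
      (fun k => (norm_mollify_sub_le μ (hint _) (hr k) (hnear k)).trans ?_)
      (by simpa only [mul_zero] using hlim.const_mul A)
    exact mul_le_mul_of_nonneg_left
      (le_div_self (by positivity) (hr k) (pow_le_one₀ (by norm_num) (by norm_num))) hA
  · refine squeeze_zero_norm (fun k => (norm_fderiv_mollify_le μ (hint _) (hr k) (hnear k)).trans_eq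
      ?_) (by simpa only [mul_zero] using hlim.const_mul (mollifyConst μ * A))
    ring

lemma whitneyExtension_of_mem (hg : Continuous g) (hA : 0 ≤ A) (hs : 1 < s)
    (hgK : ∀ z, ∀ y ∈ K, ‖g z - g y‖ ≤ A * dist z y ^ s) (hx : x ∈ K) :
    whitneyExtension μ g K x = g x ∧ fderiv ℝ (whitneyExtension μ g K) x = 0 := by
  have hbound := norm_scaleCorrection_half_pow_le μ hg hA (by linarith) hgK
  have hsum := (summable_rpow_div_half_pow hs).mul_left ((2 + 5 * mollifyConst μ) * A)
  have hsumVal : Summable fun k : ℕ => scaleCorrection μ g K ((1 / 2) ^ k) x :=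
    .of_norm_bounded hsum fun k => (le_max_left _ _).trans (hbound k x)
  have hsumDeriv : Summable fun k : ℕ => fderiv ℝ (scaleCorrection μ g K ((1 / 2) ^ k)) x :=
    .of_norm_bounded hsum fun k => (le_max_right _ _).trans (hbound k x)
  have hterm := fun k : ℕ => scaleCorrection_of_mem μ hg (r := (1 / 2) ^ k) (by positivity) hx
  obtain ⟨hlim, hlim'⟩ := tendsto_mollify_half_pow_of_mem μ hg hA hs (hgK · x hx)
  have hhalf : ∀ k : ℕ, (1 / 2 : ℝ) ^ k / 2 = (1 / 2) ^ (k + 1) := fun k => by ring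
  simp only [hhalf] at hterm
  constructor
  · rw [whitneyExtension, tsum_eq_sub_of_tendsto hsumVal (fun k => (hterm k).1) hlim, pow_zero,
      add_sub_cancel]
  · have hdiff : ∀ k : ℕ, Differentiable ℝ (scaleCorrection μ g K ((1 / 2) ^ k)) := fun k =>
      (contDiff_one_scaleCorrection μ hg K _).differentiable one_ne_zero
    have htsum := fderiv_tsum_apply hsum hdiff (fun k x => (le_max_right _ _).trans (hbound k x))
      hsumVal x
    have hdiffTsum := differentiable_tsum hsum (fun k x => (hdiff k x).hasFDerivAt)
      (fun k x => (le_max_right _ _).trans (hbound k x))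
    unfold whitneyExtension
    rw [fderiv_fun_add (differentiable_mollify μ hg 1 x) (hdiffTsum x), htsum,
      tsum_eq_sub_of_tendsto hsumDeriv (fun k => (hterm k).2) hlim', pow_zero, zero_sub,
      add_neg_cancel]

end WhitneyExtension

open scoped NNReal in
theorem exists_contDiff_one_eqOn_fderiv_eq_zero_of_holderOnWith {V : Type*}
    [NormedAddCommGroup V] [NormedSpace ℝ V] [FiniteDimensional ℝ V] {K : Set V} {f : V → ℝ}
    {M s : ℝ≥0} (hK : IsCompact K) (hs : 1 < s) (hf : HolderOnWith M s f K) :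
    ∃ F : V → ℝ, ContDiff ℝ 1 F ∧ EqOn F f K ∧ ∀ x ∈ K, fderiv ℝ F x = 0 := by
  borelize V
  let A : ℝ := M * 2 ^ ((s : ℝ) - 1)
  have hg : Continuous (holderEnvelope A s f K) :=
    continuous_holderEnvelope A hK (hf.continuousOn (zero_lt_one.trans hs))
  have hgf := fun z y (hy : y ∈ K) => abs_holderEnvelope_sub_le hs.le hf z hy
  have heq : EqOn (holderEnvelope A s f K) f K := fun y hy => by
    have hyy := hgf y y hy
    rw [dist_self, Real.zero_rpow (by positivity), mul_zero] at hyy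
    exact sub_eq_zero.mp (abs_nonpos_iff.mp hyy)
  have hgK : ∀ z, ∀ y ∈ K, ‖holderEnvelope A s f K z - holderEnvelope A s f K y‖ ≤
      A * dist z y ^ (s : ℝ) := fun z y hy => by
    rw [heq hy]
    exact hgf z y hy
  have hext := fun x (hx : x ∈ K) =>
    whitneyExtension_of_mem Measure.addHaar hg (by positivity) (mod_cast hs) hgK hx
  exact ⟨_, contDiff_one_whitneyExtension Measure.addHaar hg (by positivity) (mod_cast hs) hgK,
    fun x hx => (hext x hx).1.trans (heq hx), fun x hx => (hext x hx).2⟩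

section SimilarityDimension

open Filter Topology
open scoped NNReal ENNReal

variable {X ι : Type*} {φ : ι → X → X} {E : Set X}

/-- The composition `φ (w 0) ∘ ⋯ ∘ φ (w (n - 1))` along a word `w` of length `n`. -/
def wordMap (φ : ι → X → X) : (n : ℕ) → (Fin n → ι) → X → X
  | 0, _ => id
  | n + 1, w => φ (w 0) ∘ wordMap φ n (Fin.tail w)

lemma subset_iUnion_wordMap_image (hE : E ⊆ ⋃ i, φ i '' E) (n : ℕ) :
    E ⊆ ⋃ w : Fin n → ι, wordMap φ n w '' E := by
  induction n with
  | zero => exact fun x hx => mem_iUnion.mpr ⟨Fin.elim0, x, hx, rfl⟩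
  | succ n ih =>
    intro x hx
    obtain ⟨i, y, hy, rfl⟩ := mem_iUnion.mp (hE hx)
    obtain ⟨w, z, hz, rfl⟩ := mem_iUnion.mp (ih hy)
    exact mem_iUnion.mpr ⟨Fin.cons i w, z, hz, rfl⟩

lemma lipschitzWith_wordMap [PseudoEMetricSpace X] {r : ι → ℝ≥0}
    (hφ : ∀ i, LipschitzWith (r i) (φ i)) (n : ℕ) (w : Fin n → ι) :
    LipschitzWith (∏ j, r (w j)) (wordMap φ n w) := by
  induction n with
  | zero => exact LipschitzWith.id
  | succ n ih =>
    rw [Fin.prod_univ_succ]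
    exact (hφ (w 0)).comp (ih (Fin.tail w))

lemma ediam_wordMap_image_rpow_le [PseudoEMetricSpace X] {r : ι → ℝ≥0}
    (hφ : ∀ i, LipschitzWith (r i) (φ i)) (E : Set X) {s : ℝ} (hs : 0 ≤ s) (n : ℕ)
    (w : Fin n → ι) :
    Metric.ediam (wordMap φ n w '' E) ^ s ≤ (∏ j, (r (w j) : ℝ≥0∞) ^ s) * Metric.ediam E ^ s :=
  calc Metric.ediam (wordMap φ n w '' E) ^ s
      ≤ ((∏ j, r (w j) : ℝ≥0) * Metric.ediam E) ^ s :=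
        ENNReal.rpow_le_rpow ((lipschitzWith_wordMap hφ n w).ediam_image_le E) hs
    _ = (∏ j, (r (w j) : ℝ≥0∞) ^ s) * Metric.ediam E ^ s := by
        rw [ENNReal.mul_rpow_of_nonneg _ _ hs, ENNReal.ofNNReal_finsetProd,
          ENNReal.prod_rpow_of_nonneg hs]

variable [Fintype ι] [EMetricSpace X] {r : ι → ℝ≥0}

theorem hausdorffMeasure_eq_zero_of_sum_rpow_lt_one [MeasurableSpace X] [BorelSpace X] {s : ℝ}
    (hφ : ∀ i, LipschitzWith (r i) (φ i)) (hE : Metric.ediam E ≠ ∞) (hEφ : E ⊆ ⋃ i, φ i '' E)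
    (hs : 0 < s) (hr : ∑ i, (r i : ℝ≥0∞) ^ s < 1) : μH[s] E = 0 := by
  let δ : ℕ → ℝ≥0∞ := fun n => (∑ i, (r i : ℝ≥0∞) ^ s) ^ n * Metric.ediam E ^ s
  have hδ : Tendsto δ atTop (𝓝 0) := by
    simpa only [zero_mul] using ENNReal.Tendsto.mul_const
      (ENNReal.tendsto_pow_atTop_nhds_zero_of_lt_one hr)
      (Or.inr (ENNReal.rpow_ne_top_of_nonneg hs.le hE))
  have hsum : ∀ n, ∑ w : Fin n → ι, Metric.ediam (wordMap φ n w '' E) ^ s ≤ δ n := fun n =>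
    calc _ ≤ ∑ w : Fin n → ι, (∏ j, (r (w j) : ℝ≥0∞) ^ s) * Metric.ediam E ^ s :=
          Finset.sum_le_sum fun w _ => ediam_wordMap_image_rpow_le hφ E hs.le n w
      _ = δ n := by rw [← Finset.sum_mul, ← Fintype.sum_pow fun i => (r i : ℝ≥0∞) ^ s]
  have hdiam : ∀ n w, Metric.ediam (wordMap φ n w '' E) ≤ δ n ^ s⁻¹ := fun n w =>
    (ENNReal.le_rpow_inv_iff hs).mpr <|
      (Finset.single_le_sum (f := fun w => Metric.ediam (wordMap φ n w '' E) ^ s)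
        (fun _ _ => zero_le) (Finset.mem_univ w)).trans (hsum n)
  have hδs : Tendsto (fun n => δ n ^ s⁻¹) atTop (𝓝 0) := by
    simpa only [ENNReal.zero_rpow_of_pos (inv_pos.mpr hs)] using hδ.ennrpow_const s⁻¹
  have hliminf := Measure.hausdorffMeasure_le_liminf_sum s E _ hδs
    (fun n w => wordMap φ n w '' E) (.of_forall hdiam)
    (.of_forall (subset_iUnion_wordMap_image hEφ))
  exact le_zero_iff.mp <|
    (hliminf.trans (liminf_le_liminf (.of_forall hsum))).trans_eq hδ.liminf_eq

theorem exists_lt_one_le_sum_rpow_of_lt_dimH {d : ℝ≥0} (hφ : ∀ i, LipschitzWith (r i) (φ i))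
    (hE : Metric.ediam E ≠ ∞) (hEφ : E ⊆ ⋃ i, φ i '' E) (hd : d < dimH E) :
    ∃ s : ℝ≥0, d < s ∧ 1 ≤ ∑ i, r i ^ (s : ℝ) := by
  borelize X
  obtain ⟨s, hds, hs⟩ := ENNReal.lt_iff_exists_nnreal_btwn.mp hd
  have hds' : d < s := mod_cast hds
  refine ⟨s, hds', ?_⟩
  by_contra! hlt
  have hsum : ∑ i, (r i : ℝ≥0∞) ^ (s : ℝ) < 1 := by
    simp only [← ENNReal.coe_rpow_of_nonneg _ s.coe_nonneg]
    exact_mod_cast hlt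
  have hzero := hausdorffMeasure_eq_zero_of_sum_rpow_lt_one hφ hE hEφ (mod_cast pos_of_gt hds') hsum
  exact hs.not_ge (dimH_le_of_hausdorffMeasure_ne_top (hzero ▸ ENNReal.zero_ne_top))

end SimilarityDimension

section SelfSimilarFunction

open Filter Topology Uniformity unitInterval
open scoped NNReal

lemma exists_homeomorph_of_range_eq {X Y Z : Type*} [TopologicalSpace X] [TopologicalSpace Y]
    [TopologicalSpace Z] [CompactSpace X] [CompactSpace Y] [T2Space Z] {f : X → Z} {g : Y → Z}
    (hf : Continuous f) (hf' : f.Injective) (hg : Continuous g) (hg' : g.Injective)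
    (h : range f = range g) : ∃ Θ : X ≃ₜ Y, ∀ x, g (Θ x) = f x := by
  let Θf := (hf.isClosedEmbedding hf').isEmbedding.toHomeomorph
  let Θg := (hg.isClosedEmbedding hg').isEmbedding.toHomeomorph
  refine ⟨(Θf.trans (Homeomorph.setCongr h)).trans Θg.symm, fun x => ?_⟩
  exact congrArg Subtype.val (Θg.apply_symm_apply (Homeomorph.setCongr h (Θf x)))

lemma isUniformInducing_of_continuous_injective {X Y : Type*} [UniformSpace X] [CompactSpace X]
    [UniformSpace Y] [T2Space Y] {f : X → Y} (hf : Continuous f) (hf' : f.Injective) :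
    IsUniformInducing f := by
  refine isUniformInducing_iff_uniformSpace.mpr (unique_uniformity_of_compact ?_ rfl)
  exact (hf.isClosedEmbedding hf').isInducing.eq_induced.symm

lemma homeomorph_endpoints {X Y : Type*} [ConditionallyCompleteLinearOrder X] [DenselyOrdered X]
    [BoundedOrder X] [TopologicalSpace X] [OrderTopology X] [LinearOrder Y] [BoundedOrder Y]
    [TopologicalSpace Y] [OrderClosedTopology Y] (Θ : X ≃ₜ Y) :
    (Θ ⊥ = ⊥ ∧ Θ ⊤ = ⊤) ∨ (Θ ⊥ = ⊤ ∧ Θ ⊤ = ⊥) := by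
  rcases Θ.continuous.strictMono_of_inj_boundedOrder' Θ.injective with hΘ | hΘ
  · exact .inl ⟨map_bot (hΘ.orderIsoOfSurjective Θ Θ.surjective),
      map_top (hΘ.orderIsoOfSurjective Θ Θ.surjective)⟩
  · exact .inr ⟨map_bot (hΘ.dual_right.orderIsoOfSurjective _ Θ.surjective),
      map_top (hΘ.dual_right.orderIsoOfSurjective _ Θ.surjective)⟩

/-- `θ` collapses `[0, a]` to one endpoint of the unit interval and `[b, 1]` to the other one,
in either order. -/
structure IsCollapse (θ : C(I, I)) (a b : I) : Prop where
  endpoints : (θ 0 = 0 ∧ θ 1 = 1) ∨ (θ 0 = 1 ∧ θ 1 = 0)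
  left : ∀ u ≤ a, θ u = θ 0
  right : ∀ u, b ≤ u → θ u = θ 1

lemma exists_isCollapse {V : Type*} [TopologicalSpace V] [T2Space V] {γ : I → V} {φ : V → V}
    {a b : I} (hγ : Continuous γ) (hγ' : γ.Injective) (hφ : ContinuousOn φ (range γ))
    (hφ' : InjOn φ (range γ)) (hab : a ≤ b) (h : γ '' Icc a b = φ '' range γ) :
    ∃ θ : C(I, I), IsCollapse θ a b ∧ ∀ u ∈ Icc a b, φ (γ (θ u)) = γ u := by
  have : Fact (a ≤ b) := ⟨hab⟩
  obtain ⟨Θ, hΘ⟩ := exists_homeomorph_of_range_eq (f := fun u : Icc a b => γ u) (g := φ ∘ γ)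
    (hγ.comp continuous_subtype_val) (hγ'.comp Subtype.val_injective)
    (hφ.comp_continuous hγ mem_range_self)
    (fun u v huv => hγ' (hφ' (mem_range_self u) (mem_range_self v) huv))
    (by rw [range_comp φ γ, ← h, image_eq_range])
  have hleft : ∀ u ≤ a, projIcc a b hab u = ⊥ := fun u hu => projIcc_of_le_left hab hu
  have hright : ∀ u, b ≤ u → projIcc a b hab u = ⊤ := fun u hu => projIcc_of_right_le hab hu
  refine ⟨⟨Θ ∘ projIcc a b hab, Θ.continuous.comp continuous_projIcc⟩, ⟨?_, ?_, ?_⟩, ?_⟩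
  · simp only [ContinuousMap.coe_mk, Function.comp_apply, hleft 0 nonneg', hright 1 le_one']
    exact homeomorph_endpoints Θ
  · intro u hu
    simp only [ContinuousMap.coe_mk, Function.comp_apply, hleft u hu, hleft 0 nonneg']
  · intro u hu
    simp only [ContinuousMap.coe_mk, Function.comp_apply, hright u hu, hright 1 le_one']
  · intro u hu
    simpa only [ContinuousMap.coe_mk, Function.comp_apply, projIcc_of_mem hab hu]
      using hΘ ⟨u, hu⟩

lemma IsCollapse.eq_zero_or_eq_one {θ : C(I, I)} {a b u : I} (hθ : IsCollapse θ a b)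
    (hu : u ∉ Ioo a b) : θ u = 0 ∨ θ u = 1 := by
  rcases le_or_gt u a with hua | hau
  · rw [hθ.left u hua]
    exact hθ.endpoints.imp And.left And.left
  · rw [hθ.right u (not_lt.mp fun hub => hu ⟨hau, hub⟩)]
    exact hθ.endpoints.symm.imp And.right And.right

lemma nonpos_of_forall_le_mul {X : Type*} {f : X → ℝ} {q D : ℝ} (hfD : ∀ x, f x ≤ D) (hq₀ : 0 ≤ q)
    (hq₁ : q < 1) (h : ∀ e ≥ 0, (∀ x, f x ≤ e) → ∀ x, f x ≤ q * e) (x : X) : f x ≤ 0 := by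
  have hpow : ∀ n : ℕ, ∀ x, f x ≤ q ^ n * max D 0 := by
    intro n
    induction n with
    | zero => exact fun x => by simpa only [pow_zero, one_mul] using (hfD x).trans (le_max_left D 0)
    | succ n ih => simpa only [pow_succ', mul_assoc] using h _ (by positivity) ih
  refine ge_of_tendsto' (x := atTop) ?_ fun n => hpow n x
  simpa only [zero_mul] using (tendsto_pow_atTop_nhds_zero_of_lt_one hq₀ hq₁).mul_const (max D 0)

lemma mul_dist_rpow_le {V : Type*} [PseudoMetricSpace V] {φ : V → V} {x y : V} {ρ r : ℝ≥0} {s : ℝ}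
    (hs : 0 ≤ s) (hφ : ρ * dist x y ≤ dist (φ x) (φ y)) (hr : r ≤ ρ ^ s) :
    r * dist x y ^ s ≤ dist (φ x) (φ y) ^ s :=
  calc r * dist x y ^ s ≤ ρ ^ s * dist x y ^ s := by gcongr; exact hr
    _ = (ρ * dist x y) ^ s := (Real.mul_rpow ρ.2 dist_nonneg).symm
    _ ≤ dist (φ x) (φ y) ^ s := by gcongr

-- The excess of `|F u - F v|` over `M * dist (γ u) (γ v) ^ s` is bounded, and the similarities
-- scale it down by the factor `q`, so it cannot be positive.
theorem exists_abs_sub_le_mul_dist_rpow {ι X V : Type*} [UniformSpace X] [CompactSpace X]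
    [MetricSpace V] {F : C(X, ℝ)} {γ : X → V} {P : ι → Set X} {θ : ι → X → X} {φ : ι → V → V}
    {p ρ : ι → ℝ≥0} {q : ℝ≥0} {s : ℝ} (hγ : Continuous γ) (hγ' : γ.Injective)
    (hφ : ∀ i x y, ρ i * dist x y ≤ dist (φ i x) (φ i y)) (hs : 0 ≤ s)
    (hθγ : ∀ i, ∀ u ∈ P i, φ i (γ (θ i u)) = γ u) (hq : q < 1) (hpq : ∀ i, p i ≤ q)
    (hpρ : ∀ i, p i ≤ ρ i ^ s)
    (hF : ∀ᶠ z in 𝓤 X, F z.1 = F z.2 ∨ ∃ i, z.1 ∈ P i ∧ z.2 ∈ P i ∧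
      |F z.1 - F z.2| ≤ p i * |F (θ i z.1) - F (θ i z.2)|) :
    ∃ M : ℝ≥0, ∀ u v, |F u - F v| ≤ M * dist (γ u) (γ v) ^ s := by
  rw [(isUniformInducing_of_continuous_injective hγ hγ').comap_uniformity.symm] at hF
  obtain ⟨c, hc, hlocal⟩ := (Metric.uniformity_basis_dist.comap _).eventually_iff.mp hF
  have hD : ∀ u v, |F u - F v| ≤ 2 * ‖F‖ := fun u v => F.dist_le_two_norm u v
  let M : ℝ≥0 := 2 * ‖F‖₊ / ⟨c, hc.le⟩ ^ s
  refine ⟨M, fun u v => ?_⟩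
  suffices h : ∀ z : X × X, |F z.1 - F z.2| - M * dist (γ z.1) (γ z.2) ^ s ≤ 0 from
    sub_nonpos.mp (h (u, v))
  refine nonpos_of_forall_le_mul (D := 2 * ‖F‖) ?_ q.2 hq ?_
  · exact fun z => (sub_le_self _ (by positivity)).trans (hD _ _)
  rintro e he hexc ⟨u, v⟩
  have hexc' : ∀ x y, |F x - F y| ≤ e + M * dist (γ x) (γ y) ^ s := fun x y =>
    sub_le_iff_le_add.mp (hexc (x, y))
  suffices h : |F u - F v| ≤ q * e + M * dist (γ u) (γ v) ^ s from sub_le_iff_le_add.mpr h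
  rcases le_or_gt c (dist (γ u) (γ v)) with hfar | hnear
  · calc |F u - F v| ≤ 2 * ‖F‖ := hD u v
      _ = M * c ^ s := (div_mul_cancel₀ _ (Real.rpow_pos_of_pos hc s).ne').symm
      _ ≤ M * dist (γ u) (γ v) ^ s := by gcongr
      _ ≤ q * e + M * dist (γ u) (γ v) ^ s := le_add_of_nonneg_left (by positivity)
  rcases hlocal (x := (u, v)) hnear with heq | ⟨i, hu, hv, hle⟩
  · have heq' : |F u - F v| = 0 := abs_eq_zero.mpr (sub_eq_zero.mpr heq)
    rw [heq']
    positivity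
  have hscale := mul_dist_rpow_le hs (hφ i (γ (θ i u)) (γ (θ i v))) (hpρ i)
  rw [hθγ i u hu, hθγ i v hv] at hscale
  calc |F u - F v| ≤ p i * |F (θ i u) - F (θ i v)| := hle
    _ ≤ p i * (e + M * dist (γ (θ i u)) (γ (θ i v)) ^ s) := by gcongr; exact hexc' _ _
    _ = p i * e + M * (p i * dist (γ (θ i u)) (γ (θ i v)) ^ s) := by ring
    _ ≤ q * e + M * dist (γ u) (γ v) ^ s := by gcongr; exact hpq i

variable {ι : Type*} [Fintype ι]

/-- The operator whose fixed point is the self-similar function with weights `p`. The absolute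
value makes it insensitive to whether `θ i` preserves or reverses the orientation. -/
def selfSimilarStep (p : ι → ℝ≥0) (θ : ι → C(I, I)) (F : C(I, ℝ)) : C(I, ℝ) where
  toFun u := ∑ i, p i * |F (θ i u) - F (θ i 0)|

/-- The continuous functions on the unit interval that take the value `0` at `0` and `1` at `1`. -/
def normalizedFunctions : Set C(I, ℝ) := {F | F 0 = 0 ∧ F 1 = 1}

lemma isClosed_normalizedFunctions : IsClosed normalizedFunctions :=
  (isClosed_eq (continuous_eval_const 0) continuous_const).inter
    (isClosed_eq (continuous_eval_const 1) continuous_const)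

variable {p : ι → ℝ≥0} {θ : ι → C(I, I)} {a b : ι → I} {F G : C(I, ℝ)}

lemma selfSimilarStep_mem_normalizedFunctions (hθ : ∀ i, IsCollapse (θ i) (a i) (b i))
    (hp : ∑ i, p i = 1) (hF : F ∈ normalizedFunctions) :
    selfSimilarStep p θ F ∈ normalizedFunctions := by
  have hosc : ∀ i, |F (θ i 1) - F (θ i 0)| = 1 := fun i => by
    rcases (hθ i).endpoints with ⟨h0, h1⟩ | ⟨h0, h1⟩ <;> simp [h0, h1, hF.1, hF.2]
  refine ⟨by simp [selfSimilarStep], ?_⟩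
  simp only [selfSimilarStep, ContinuousMap.coe_mk, hosc, mul_one]
  exact_mod_cast hp

lemma sum_le_of_support_subsingleton {w : ι → ℝ} {e : ℝ} (he : 0 ≤ e) (hw : ∀ i, w i ≤ e)
    (h : w.support.Subsingleton) : ∑ i, w i ≤ e := by
  rcases h.eq_empty_or_singleton with h0 | ⟨i, hi⟩
  · simpa only [Function.support_eq_empty_iff.mp h0, Pi.zero_apply, Finset.sum_const_zero]
  · rw [Fintype.sum_eq_single i fun j hj => Function.notMem_support.mp (hi ▸ hj)]
    exact hw i

-- At every point at most one summand of the two values differs, because the pieces are disjoint.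
lemma dist_selfSimilarStep_le {q : ℝ≥0} (hθ : ∀ i, IsCollapse (θ i) (a i) (b i))
    (hab : Pairwise fun i j => Disjoint (Ioo (a i) (b i)) (Ioo (a j) (b j))) (hpq : ∀ i, p i ≤ q)
    (hF : F ∈ normalizedFunctions) (hG : G ∈ normalizedFunctions) :
    dist (selfSimilarStep p θ F) (selfSimilarStep p θ G) ≤ q * dist F G := by
  have hq : 0 ≤ q * dist F G := by positivity
  have heq : ∀ {x : I}, x = 0 ∨ x = 1 → F x = G x := by
    rintro x (rfl | rfl)
    exacts [hF.1.trans hG.1.symm, hF.2.trans hG.2.symm]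
  have hstart : ∀ i, F (θ i 0) = G (θ i 0) := fun i =>
    heq ((hθ i).endpoints.imp And.left And.left)
  refine (ContinuousMap.dist_le hq).mpr fun u => ?_
  let w : ι → ℝ := fun i => p i * |F (θ i u) - G (θ i u)|
  have hterm : ∀ i, |p i * (|F (θ i u) - F (θ i 0)| - |G (θ i u) - G (θ i 0)|)| ≤ w i := by
    intro i
    rw [abs_mul, NNReal.abs_eq, hstart i]
    refine mul_le_mul_of_nonneg_left ((abs_abs_sub_abs_le _ _).trans_eq ?_) (p i).2
    rw [sub_sub_sub_cancel_right]
  have hw : ∀ i, w i ≤ q * dist F G := fun i =>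
    mul_le_mul (hpq i) (F.dist_apply_le_dist (g := G) (θ i u)) (abs_nonneg _) q.2
  have hsupp : ∀ i ∈ w.support, u ∈ Ioo (a i) (b i) := by
    intro i hi
    by_contra hu
    exact hi (by simp only [w, heq ((hθ i).eq_zero_or_eq_one hu), sub_self, abs_zero, mul_zero])
  rw [Real.dist_eq]
  calc |selfSimilarStep p θ F u - selfSimilarStep p θ G u|
      ≤ ∑ i, w i := by
        simp only [selfSimilarStep, ContinuousMap.coe_mk, ← Finset.sum_sub_distrib, ← mul_sub]
        exact (Finset.abs_sum_le_sum_abs _ _).trans (Finset.sum_le_sum fun i _ => hterm i)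
    _ ≤ q * dist F G := sum_le_of_support_subsingleton hq hw fun i hi j hj =>
        hab.eq fun hij => disjoint_left.mp hij (hsupp i hi) (hsupp j hj)

theorem exists_selfSimilar {q : ℝ≥0} (hθ : ∀ i, IsCollapse (θ i) (a i) (b i))
    (hab : Pairwise fun i j => Disjoint (Ioo (a i) (b i)) (Ioo (a j) (b j))) (hp : ∑ i, p i = 1)
    (hq : q < 1) (hpq : ∀ i, p i ≤ q) :
    ∃ F ∈ normalizedFunctions, selfSimilarStep p θ F = F := by
  have hmaps : MapsTo (selfSimilarStep p θ) normalizedFunctions normalizedFunctions :=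
    fun F hF => selfSimilarStep_mem_normalizedFunctions hθ hp hF
  have hcontr : ContractingWith q (hmaps.restrict _ _ _) :=
    ⟨hq, LipschitzWith.of_dist_le_mul fun F G => dist_selfSimilarStep_le hθ hab hpq F.2 G.2⟩
  let F₀ : C(I, ℝ) := ⟨Subtype.val, continuous_subtype_val⟩
  obtain ⟨F, hF, hfix, -⟩ := hcontr.exists_fixedPoint' isClosed_normalizedFunctions.isComplete
    hmaps (x := F₀) ⟨rfl, rfl⟩ (edist_ne_top _ _)
  exact ⟨F, hF, hfix⟩

lemma eventually_eq_endpoint_of_selfSimilar (hθ : ∀ i, IsCollapse (θ i) (a i) (b i))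
    (ha : ∀ i, 0 < a i) (hb : ∀ i, b i < 1) (hF : selfSimilarStep p θ F = F) {x : I}
    (hx : x = 0 ∨ x = 1) : ∀ᶠ u in 𝓝 x, F u = F x := by
  have hconst : ∀ᶠ u in 𝓝 x, ∀ i, θ i u = θ i x := by
    refine eventually_all.mpr fun i => ?_
    rcases hx with rfl | rfl
    · exact (eventually_le_nhds (ha i)).mono (hθ i).left
    · exact (eventually_ge_nhds (hb i)).mono (hθ i).right
  filter_upwards [hconst] with u hu
  rw [← hF]
  simp only [selfSimilarStep, ContinuousMap.coe_mk, hu]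

lemma eventually_mem_Ioo_of_selfSimilar_ne (hθ : ∀ i, IsCollapse (θ i) (a i) (b i))
    (ha : ∀ i, 0 < a i) (hb : ∀ i, b i < 1) (hF : selfSimilarStep p θ F = F) :
    ∀ᶠ z in 𝓤 I, ∀ i, F (θ i z.1) ≠ F (θ i z.2) →
      z.1 ∈ Ioo (a i) (b i) ∧ z.2 ∈ Ioo (a i) (b i) := by
  rw [compactSpace_uniformity, eventually_iSup]
  refine fun u => eventually_all.mpr fun i => ?_
  by_cases hu : u ∈ Ioo (a i) (b i)
  · filter_upwards [prod_mem_nhds (isOpen_Ioo.mem_nhds hu) (isOpen_Ioo.mem_nhds hu)]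
      with z hz _ using hz
  · have hconst : ∀ᶠ v in 𝓝 u, F (θ i v) = F (θ i u) :=
      (θ i).continuous.continuousAt.eventually
        (eventually_eq_endpoint_of_selfSimilar hθ ha hb hF ((hθ i).eq_zero_or_eq_one hu))
    filter_upwards [hconst.prod_nhds hconst] with z hz hne using absurd (hz.1.trans hz.2.symm) hne

lemma eventually_selfSimilar_eq_or_abs_sub_le (hθ : ∀ i, IsCollapse (θ i) (a i) (b i))
    (hab : Pairwise fun i j => Disjoint (Ioo (a i) (b i)) (Ioo (a j) (b j)))
    (ha : ∀ i, 0 < a i) (hb : ∀ i, b i < 1) (hF : selfSimilarStep p θ F = F) :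
    ∀ᶠ z in 𝓤 I, F z.1 = F z.2 ∨ ∃ i, z.1 ∈ Ioo (a i) (b i) ∧ z.2 ∈ Ioo (a i) (b i) ∧
      |F z.1 - F z.2| ≤ p i * |F (θ i z.1) - F (θ i z.2)| := by
  filter_upwards [eventually_mem_Ioo_of_selfSimilar_ne hθ ha hb hF] with z hz
  have hsub : F z.1 - F z.2 =
      ∑ i, p i * (|F (θ i z.1) - F (θ i 0)| - |F (θ i z.2) - F (θ i 0)|) := by
    have hfix : ∀ u, F u = ∑ i, p i * |F (θ i u) - F (θ i 0)| := fun u => (congr($hF u)).symm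
    rw [hfix z.1, hfix z.2]
    simp only [← Finset.sum_sub_distrib, ← mul_sub]
  by_cases! hall : ∀ i, F (θ i z.1) = F (θ i z.2)
  · left
    rw [← sub_eq_zero, hsub]
    exact Finset.sum_eq_zero fun i _ => by rw [hall i, sub_self, mul_zero]
  obtain ⟨i, hi⟩ := hall
  have hother : ∀ j ≠ i, F (θ j z.1) = F (θ j z.2) := fun j hj =>
    by_contra fun hne => disjoint_left.mp (hab hj) (hz j hne).1 (hz i hi).1
  refine .inr ⟨i, (hz i hi).1, (hz i hi).2, ?_⟩
  rw [hsub, Fintype.sum_eq_single i fun j hj => by rw [hother j hj, sub_self, mul_zero], abs_mul,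
    NNReal.abs_eq]
  refine mul_le_mul_of_nonneg_left ((abs_abs_sub_abs_le _ _).trans_eq ?_) (p i).2
  rw [sub_sub_sub_cancel_right]

lemma exists_weights {ρ : ι → ℝ≥0} {s : ℝ} (hρ : ∀ i, ρ i < 1) (hs : 0 < s)
    (hsum : 1 ≤ ∑ i, ρ i ^ s) :
    ∃ p : ι → ℝ≥0, ∃ q < 1, ∑ i, p i = 1 ∧ ∀ i, p i ≤ q ∧ p i ≤ ρ i ^ s := by
  have hle : ∀ i, ρ i ^ s / ∑ j, ρ j ^ s ≤ ρ i ^ s := fun i => div_le_self zero_le hsum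
  refine ⟨fun i => ρ i ^ s / ∑ j, ρ j ^ s, Finset.univ.sup fun i => ρ i ^ s, ?_, ?_, fun i =>
    ⟨(hle i).trans (Finset.le_sup (f := fun i => ρ i ^ s) (Finset.mem_univ i)), hle i⟩⟩
  · exact (Finset.sup_lt_iff one_pos).mpr fun i _ => NNReal.rpow_lt_one (hρ i) hs
  · rw [← Finset.sum_div, div_self (one_pos.trans_le hsum).ne']

theorem exists_abs_sub_le_mul_dist_rpow_of_image_Icc_eq {V : Type*} [MetricSpace V] {γ : I → V}
    {φ : ι → V → V} {ρ : ι → ℝ≥0} {s : ℝ} (hγ : Continuous γ) (hγ' : γ.Injective)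
    (hρ₀ : ∀ i, 0 < ρ i) (hρ₁ : ∀ i, ρ i < 1) (hφ : ∀ i x y, dist (φ i x) (φ i y) = ρ i * dist x y)
    (ha : ∀ i, 0 < a i) (hb : ∀ i, b i < 1) (hle : ∀ i, a i ≤ b i)
    (hab : Pairwise fun i j => Disjoint (Ioo (a i) (b i)) (Ioo (a j) (b j)))
    (hγφ : ∀ i, γ '' Icc (a i) (b i) = φ i '' range γ) (hs : 0 < s) (hsum : 1 ≤ ∑ i, ρ i ^ s) :
    ∃ F ∈ normalizedFunctions, ∃ M : ℝ≥0, ∀ u v, |F u - F v| ≤ M * dist (γ u) (γ v) ^ s := by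
  have hcont : ∀ i, Continuous (φ i) := fun i =>
    (LipschitzWith.of_dist_le_mul fun x y => (hφ i x y).le).continuous
  have hinj : ∀ i, (φ i).Injective := fun i x y hxy => by
    simpa only [hxy, dist_self, zero_eq_mul, NNReal.coe_eq_zero, (hρ₀ i).ne', false_or,
      dist_eq_zero] using hφ i x y
  choose θ hθ hθγ using fun i => exists_isCollapse hγ hγ' (hcont i).continuousOn
    (hinj i).injOn (hle i) (hγφ i)
  obtain ⟨p, q, hq, hp, hpq⟩ := exists_weights hρ₁ hs hsum
  obtain ⟨F, hF, hfix⟩ := exists_selfSimilar hθ hab hp hq fun i => (hpq i).1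
  exact ⟨F, hF, exists_abs_sub_le_mul_dist_rpow hγ hγ' (fun i x y => (hφ i x y).ge) hs.le
    (fun i u hu => hθγ i u (Ioo_subset_Icc_self hu)) hq (fun i => (hpq i).1) (fun i => (hpq i).2)
    (eventually_selfSimilar_eq_or_abs_sub_le hθ hab ha hb hfix)⟩

end SelfSimilarFunction

section CondensationArc

open unitInterval
open scoped NNReal ENNReal

variable {V ι : Type*} [NormedAddCommGroup V] [NormedSpace ℝ V] [FiniteDimensional ℝ V]

lemma holderOnWith_range_extend {X Y : Type*} [PseudoMetricSpace Y] {γ : X → Y} {F : X → ℝ}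
    {M s : ℝ≥0} (hγ : γ.Injective) (hF : ∀ u v, |F u - F v| ≤ M * dist (γ u) (γ v) ^ (s : ℝ)) :
    HolderOnWith M s (Function.extend γ F 0) (range γ) := by
  rintro _ ⟨u, rfl⟩ _ ⟨v, rfl⟩
  rw [hγ.extend_apply, hγ.extend_apply, edist_dist, edist_dist, Real.dist_eq,
    ENNReal.ofReal_rpow_of_nonneg dist_nonneg s.coe_nonneg, ← ENNReal.ofReal_coe_nnreal,
    ← ENNReal.ofReal_mul M.coe_nonneg]
  exact ENNReal.ofReal_le_ofReal (hF u v)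

theorem exists_contDiff_one_fderiv_eq_zero_of_arc {γ : I → V} {F : I → ℝ} {M s : ℝ≥0} (hs : 1 < s)
    (hγ : Continuous γ) (hγ' : γ.Injective)
    (hF : ∀ u v, |F u - F v| ≤ M * dist (γ u) (γ v) ^ (s : ℝ)) :
    ∃ f : V → ℝ, ContDiff ℝ 1 f ∧ (∀ u, f (γ u) = F u) ∧ ∀ x ∈ range γ, fderiv ℝ f x = 0 := by
  obtain ⟨f, hf, hfF, hf'⟩ := exists_contDiff_one_eqOn_fderiv_eq_zero_of_holderOnWith
    (isCompact_range hγ) hs (holderOnWith_range_extend hγ' hF)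
  exact ⟨f, hf, fun u => (hfF (mem_range_self u)).trans (hγ'.extend_apply F 0 u), hf'⟩

lemma pairwise_disjoint_Ioo_castSucc_succ {α : Type*} [Preorder α] {n : ℕ} {t : Fin (n + 1) → α}
    (ht : Monotone t) : Pairwise fun i j : Fin n =>
      Disjoint (Ioo (t i.castSucc) (t i.succ)) (Ioo (t j.castSucc) (t j.succ)) := by
  intro i j hij
  simpa only [Function.onFun, Fin.orderSucc_castSucc] using
    ht.pairwise_disjoint_on_Ioo_succ ((Fin.castSucc_injective n).ne hij)

theorem exists_contDiff_one_fderiv_eq_zero_of_partition [Fintype ι] {γ : I → V} {φ : ι → V → V}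
    {ρ : ι → ℝ≥0} {s : ℝ≥0} {n : ℕ} {t : Fin (n + 1) → I} (hγ : Continuous γ) (hγ' : γ.Injective)
    (hρ₀ : ∀ i, 0 < ρ i) (hρ₁ : ∀ i, ρ i < 1) (hφ : ∀ i x y, dist (φ i x) (φ i y) = ρ i * dist x y)
    (ht : StrictMono t) (ℓ : ι ↪ Fin n) (hfirst : ∀ i, (ℓ i : ℕ) ≠ 0)
    (hlast : ∀ i, (ℓ i : ℕ) + 1 ≠ n)
    (hℓ : ∀ i, γ '' Icc (t (ℓ i).castSucc) (t (ℓ i).succ) = φ i '' range γ) (hs : 1 < s)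
    (hsum : 1 ≤ ∑ i, ρ i ^ (s : ℝ)) :
    ∃ f : V → ℝ, ContDiff ℝ 1 f ∧ (∀ x ∈ range γ, fderiv ℝ f x = 0) ∧
      ¬ ∀ x ∈ range γ, ∀ y ∈ range γ, f x = f y := by
  have ha : ∀ i, 0 < t (ℓ i).castSucc := fun i =>
    nonneg'.trans_lt (ht (Fin.pos_of_ne_zero fun h => hfirst i (Fin.ext_iff.mp h)))
  have hb : ∀ i, t (ℓ i).succ < 1 := fun i =>
    (ht (Fin.lt_last_iff_ne_last.mpr fun h => hlast i (Fin.ext_iff.mp h))).trans_le le_one'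
  have hdisj := (pairwise_disjoint_Ioo_castSucc_succ ht.monotone).comp_of_injective ℓ.injective
  obtain ⟨F, ⟨hF₀, hF₁⟩, M, hM⟩ := exists_abs_sub_le_mul_dist_rpow_of_image_Icc_eq hγ hγ' hρ₀ hρ₁
    hφ ha hb (fun i => ht.monotone Fin.castSucc_lt_succ.le) hdisj hℓ (one_pos.trans hs) hsum
  obtain ⟨f, hf, hfF, hf'⟩ := exists_contDiff_one_fderiv_eq_zero_of_arc hs hγ hγ' hM
  refine ⟨f, hf, hf', fun hconst => zero_ne_one (α := ℝ) ?_⟩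
  rw [← hF₀, ← hF₁, ← hfF, ← hfF]
  exact hconst _ (mem_range_self 0) _ (mem_range_self 1)

lemma symm_inr_ne_of_isLeft {α β κ : Type*} (e : κ ≃ α ⊕ β) {k : κ} (hk : (e k).isLeft = true)
    (b : β) : e.symm (.inr b) ≠ k := by
  rintro rfl
  simp at hk

theorem whitney_of_ifs_with_condensation_general {φ : ι → V → V} {ρ : ι → ℝ}
    (hρ : ∀ i, ρ i ∈ Ioo (0 : ℝ) 1) (hφ : ∀ i x y, dist (φ i x) (φ i y) = ρ i * dist x y)
    {K : Set V} {h : ℝ → V} (hcont : ContinuousOn h (Icc 0 1)) (hinj : InjOn h (Icc 0 1))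
    (himg : h '' Icc 0 1 = K) {n : ℕ} {t : Fin (n + 1) → ℝ} (ht : StrictMono t) (ht₀ : t 0 = 0)
    (ht₁ : t (Fin.last n) = 1) (ℓ : ι ↪ Fin n)
    (hℓ : ∀ i, h '' Icc (t (ℓ i).castSucc) (t (ℓ i).succ) = φ i '' K)
    (hfirst : ∀ i, (ℓ i : ℕ) ≠ 0) (hlast : ∀ i, (ℓ i : ℕ) + 1 ≠ n) {E : Set V}
    (hE : Bornology.IsBounded E) (hEφ : E ⊆ ⋃ i, φ i '' E) (hdim : 1 < dimH E) :
    IsCompact K ∧ IsConnected K ∧ ∃ f : V → ℝ, ContDiff ℝ 1 f ∧ (∀ x ∈ K, fderiv ℝ f x = 0) ∧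
      ¬ ∀ x ∈ K, ∀ y ∈ K, f x = f y := by
  refine ⟨himg ▸ isCompact_Icc.image_of_continuousOn hcont,
    himg ▸ (isConnected_Icc zero_le_one).image h hcont, ?_⟩
  have : Fintype ι := .ofInjective ℓ ℓ.injective
  lift ρ to ι → ℝ≥0 using fun i => (hρ i).1.le
  obtain ⟨s, hs, hsum⟩ := exists_lt_one_le_sum_rpow_of_lt_dimH (d := 1)
    (fun i => LipschitzWith.of_dist_le_mul fun x y => (hφ i x y).le)
    hE.ediam_ne_top hEφ (mod_cast hdim)
  let γ : I → V := fun u => h u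
  have hrange : range γ = K := (image_eq_range h _).symm.trans himg
  let T : Fin (n + 1) → I := fun j =>
    ⟨t j, ht₀ ▸ ht.monotone (Fin.zero_le j), ht₁ ▸ ht.monotone (Fin.le_last j)⟩
  have hpiece : ∀ i, γ '' Icc (T (ℓ i).castSucc) (T (ℓ i).succ) = φ i '' range γ := by
    intro i
    rw [hrange, ← hℓ i, ← image_image h Subtype.val, image_subtype_val_Icc]
  rw [← hrange]
  exact exists_contDiff_one_fderiv_eq_zero_of_partition hcont.domRestrict hinj.injective
    (fun i => (hρ i).1) (fun i => (hρ i).2) hφ ht ℓ hfirst hlast hpiece hs hsum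

end CondensationArc

theorem whitney_of_ifs_with_condensation
    (d N m : ℕ) (hm : 2 ≤ m)
    -- the contractive similitudes φ_1, …, φ_N
    (φ : Fin N → EuclideanSpace ℝ (Fin d) → EuclideanSpace ℝ (Fin d))
    (ρ : Fin N → ℝ) (hρ : ∀ i, ρ i ∈ Set.Ioo (0 : ℝ) 1)
    (hsim : ∀ i x y, dist (φ i x) (φ i y) = ρ i * dist x y)
    -- the condensation set C = C_1 ∪ ⋯ ∪ C_m, a disjoint union of arcs
    (C : Fin m → Set (EuclideanSpace ℝ (Fin d)))
    (hCarc : ∀ j, IsArc (C j))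
    (hCdisj : Pairwise fun j j' => Disjoint (C j) (C j'))
    -- K is the attractor of the IFS with condensation {C; φ_1, …, φ_N}
    (K : Set (EuclideanSpace ℝ (Fin d)))
    (hKne : K.Nonempty) (hKcomp : IsCompact K)
    (hK : K = (⋃ j, C j) ∪ ⋃ i, φ i '' K)
    -- (i) & (ii): K is an arc which decomposes as γ_1 + ⋯ + γ_{m+N}, a rearrangement
    -- (via σ) of C_1, …, C_m, φ_1(K), …, φ_N(K), with first and last pieces among the C_j
    (h : ℝ → EuclideanSpace ℝ (Fin d))
    (hcont : ContinuousOn h (Set.Icc 0 1)) (hinj : Set.InjOn h (Set.Icc 0 1))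
    (himg : h '' Set.Icc 0 1 = K)
    (t : Fin (m + N + 1) → ℝ) (ht0 : t 0 = 0) (htlast : t (Fin.last (m + N)) = 1)
    (htmono : StrictMono t)
    (σ : Fin (m + N) ≃ (Fin m ⊕ Fin N))
    (hdecomp : ∀ ℓ : Fin (m + N),
      h '' Set.Icc (t ℓ.castSucc) (t ℓ.succ)
        = Sum.elim C (fun i => φ i '' K) (σ ℓ))
    (hfirst : (σ ⟨0, by omega⟩).isLeft = true)
    (hlast : (σ ⟨m + N - 1, by omega⟩).isLeft = true)
    -- (iii): the attractor E of {φ_1, …, φ_N} has Hausdorff dimension > 1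
    (E : Set (EuclideanSpace ℝ (Fin d)))
    (hEne : E.Nonempty) (hEcomp : IsCompact E)
    (hE : E = ⋃ i, φ i '' E)
    (hdim : 1 < dimH E) :
    IsWhitneySet K := by
  exact whitney_of_ifs_with_condensation_general hρ hsim hcont hinj himg htmono ht0 htlast
    (Function.Embedding.inr.trans σ.symm.toEmbedding)
    (fun i => by simpa using hdecomp (σ.symm (.inr i)))
    (fun i h0 => symm_inr_ne_of_isLeft σ hfirst i (Fin.ext h0))
    (fun i h1 => symm_inr_ne_of_isLeft σ hlast i (Fin.ext (Nat.eq_sub_of_add_eq h1)))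
    hEcomp.isBounded hE.le hdim
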